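/- arXiv:2407.02332 — 3 statements merged into one kernel-verified Lean document; each statement's English description precedes it below -/
import Mathlib

section
/- For every N ≥ 1 there is a constant C₃ = C₃(N) ≥ 1 such that for every Borel measure μ on ℝ^N, every integer n ≥ 1, every nonempty open set Ω ⊆ ℝ^N, every T > 0 and every f ∈ VT₁⁺(T), one has (4πT)^{(N-n)/2} ∫_Ω f dμ ≤ C₃ λ_CM^n[μ] ∫_{T_{2√T}(Ω)} f dL^N, where T_r(Ω) = ∪_{p∈Ω} B_r(p) is the r-tubular neighborhood of Ω. -/
open MeasureTheory Filter Metric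
open scoped ENNReal NNReal Topology

noncomputable section

/-- Euclidean space `ℝ^N`. -/
abbrev E (N : ℕ) : Type := EuclideanSpace ℝ (Fin N)

/-- The Euclidean heat kernel `H(t,x,y) = (4πt)^{-N/2} exp(-|x-y|²/(4t))`. -/
def heatKernel (N : ℕ) (t : ℝ) (x y : E N) : ℝ :=
  (4 * Real.pi * t) ^ (-(N : ℝ) / 2) * Real.exp (-‖x - y‖ ^ 2 / (4 * t))

/-- The heat flow `(H_t u₀)(x) = ∫ u₀(y) H(t,x,y) dy`, with `H_0 u₀ = u₀`. -/
def heatFlow (N : ℕ) (u₀ : E N → ℝ) (t : ℝ) (x : E N) : ℝ :=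
  if t = 0 then u₀ x else ∫ y, u₀ y * heatKernel N t x y

/-- `VT N T u` means `u ∈ 𝒱𝒯₁⁺(T)`: `u` is `C²`, in `L¹`, positive, of unit mass, and
`2T·Hess(log u)(x)(v,v) + |v|² ≥ 0` for all `x, v`. -/
def VT (N : ℕ) (T : ℝ) (u : E N → ℝ) : Prop :=
  ContDiff ℝ 2 u ∧ Integrable u volume ∧ (∀ x, 0 < u x) ∧ (∫ x, u x) = 1 ∧
    ∀ x v : E N,
      0 ≤ 2 * T * iteratedFDeriv ℝ 2 (fun y => Real.log (u y)) x ![v, v] + ‖v‖ ^ 2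

/-- The Colding–Minicozzi entropy `λ_CM^n[μ]`. -/
def lamCM {N : ℕ} (n : ℕ) (μ : Measure (E N)) : ℝ≥0∞ :=
  ⨆ (ρ : ℝ) (_ : 0 < ρ) (x₀ : E N),
    ENNReal.ofReal ((4 * Real.pi * ρ) ^ (-(n : ℝ) / 2)) *
      ∫⁻ x, ENNReal.ofReal (Real.exp (-‖x - x₀‖ ^ 2 / (4 * ρ))) ∂μ

/-- The virtual entropy `λ_V^n[μ]`. -/
def lamV {N : ℕ} (n : ℕ) (μ : Measure (E N)) : ℝ≥0∞ :=
  ⨆ (T : ℝ) (_ : 0 < T) (u : E N → ℝ) (_ : VT N T u),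
    ENNReal.ofReal ((4 * Real.pi * T) ^ (((N : ℝ) - n) / 2)) *
      ∫⁻ x, ENNReal.ofReal (u x) ∂μ

/-- The Li–Yau weight `W^M_ρ`, expressed as a function of the squared norm `r2 = |x|²`:
`W^M_ρ(x) = ρ^M (1 + ρ²|x|²/4)^{-M}`. -/
def W (M : ℕ) (ρ r2 : ℝ) : ℝ := ρ ^ M / (1 + ρ ^ 2 * r2 / 4) ^ M

/-- The Li–Yau conformal volume `λ_LY^k[μ]`. -/
def lamLY {N : ℕ} (k : ℕ) (μ : Measure (E N)) : ℝ≥0∞ :=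
  ⨆ (ρ : ℝ) (_ : 0 < ρ) (x₀ : E N), ∫⁻ x, ENNReal.ofReal (W k ρ (‖x - x₀‖ ^ 2)) ∂μ

/-- The `k`-dimensional volume `|𝕊^k|` of the unit `k`-sphere, as the `k`-dimensional
Hausdorff measure of the unit sphere in `ℝ^{k+1}`. -/
def sphereVol (k : ℕ) : ℝ :=
  (μH[(k : ℝ)] (Metric.sphere (0 : EuclideanSpace ℝ (Fin (k + 1))) 1)).toReal

/-- The normalized Li–Yau conformal volume `λ̄_LY^k[μ] = |𝕊^k|⁻¹ λ_LY^k[μ]`. -/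
def lamLYbar {N : ℕ} (k : ℕ) (μ : Measure (E N)) : ℝ≥0∞ :=
  ENNReal.ofReal ((sphereVol k)⁻¹) * lamLY k μ

/-- The Li–Yau conformal volume `λ_LY^k[μ ⊗ L^{2m}]` of the product of `μ` with Lebesgue
measure on `ℝ^{2m}` (the squared Euclidean norm on `ℝ^{N+2m}` of `(y,z)-(y₀,z₀)` is
`|y-y₀|² + |z-z₀|²`). -/
def lamLYProd {N : ℕ} (k : ℕ) (μ : Measure (E N)) (m : ℕ) : ℝ≥0∞ :=
  ⨆ (ρ : ℝ) (_ : 0 < ρ) (y₀ : E N) (z₀ : E (2 * m)),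
    ∫⁻ p : E N × E (2 * m),
      ENNReal.ofReal (W k ρ (‖p.1 - y₀‖ ^ 2 + ‖p.2 - z₀‖ ^ 2)) ∂(μ.prod volume)

/-- The normalized Li–Yau conformal volume `λ̄_LY^k[μ ⊗ L^{2m}]`. -/
def lamLYbarProd {N : ℕ} (k : ℕ) (μ : Measure (E N)) (m : ℕ) : ℝ≥0∞ :=
  ENNReal.ofReal ((sphereVol k)⁻¹) * lamLYProd k μ m

/-- The constant `C_{M,m} = (4π)^m (M+m-1)!/(M+2m-1)!`. -/
def Cconst (M m : ℕ) : ℝ :=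
  (4 * Real.pi) ^ m * (Nat.factorial (M + m - 1) : ℝ) / (Nat.factorial (M + 2 * m - 1) : ℝ)

/-- The modified weight `Ŵ^n_{M,ρ}(x) = (4πρ)^{-n/2} (1 + |x|²/(4Mρ))^{-M}`, as a function
of the squared norm `r2 = |x|²`. -/
def What (n M : ℕ) (ρ r2 : ℝ) : ℝ :=
  (4 * Real.pi * ρ) ^ (-(n : ℝ) / 2) / (1 + r2 / (4 * (M : ℝ) * ρ)) ^ M

/-- The constant `Ĉ_{n,m} = (4π/(n+m))^{n/2} |𝕊^{n+2m}|⁻¹ C_{n,m}`. -/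
def Chat (n m : ℕ) : ℝ :=
  (4 * Real.pi / ((n : ℝ) + m)) ^ ((n : ℝ) / 2) * (sphereVol (n + 2 * m))⁻¹ * Cconst n m

/-!
A midpoint form of the Hessian bound drives the estimate: along each line, `log f` plus a quadratic
of size `‖v‖² / (4T)` is convex, so `2 f(p) exp(-‖v‖² / (4T)) ≤ f(p + v) + f(p - v)`. For
`‖v‖ < r = 2√T` the exponential is at least `e⁻¹`, and integrating over `v` bounds
`e⁻¹ |B_r| f(p)` by `∫_{B_r(p)} f`. Integrating in turn over `p ∈ Ω` against `μ` and exchanging the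
integrals leaves `∫_{𝒯_r(Ω)} f(y) μ(B_r(y)) dy`, and the Gaussian of scale `T` centred at `y` is at
least `e⁻¹` on `B_r(y)`, so that `μ(B_r(y)) ≤ e (4πT)^{n/2} λ_CM^n[μ]`.
-/

section Semiconvexity

theorem two_mul_sub_le_add_of_neg_le_deriv2 {g g' g'' : ℝ → ℝ} {c : ℝ}
    (hg : ∀ t, HasDerivAt g (g' t) t) (hg' : ∀ t, HasDerivAt g' (g'' t) t)
    (hc : ∀ t, -c ≤ g'' t) (x h : ℝ) :
    2 * g x - c * h ^ 2 ≤ g (x + h) + g (x - h) := by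
  have hq (t : ℝ) : HasDerivAt (fun t ↦ g t + c / 2 * t ^ 2) (g' t + c * t) t :=
    ((hg t).add ((hasDerivAt_pow 2 t).const_mul (c / 2))).congr_deriv (by ring)
  have hq' (t : ℝ) : HasDerivAt (fun t ↦ g' t + c * t) (g'' t + c) t :=
    ((hg' t).add ((hasDerivAt_id t).const_mul c)).congr_deriv (by ring)
  have hconv : ConvexOn ℝ Set.univ fun t ↦ g t + c / 2 * t ^ 2 :=
    convexOn_of_hasDerivWithinAt2_nonneg convex_univ
      (fun t _ ↦ (hq t).continuousAt.continuousWithinAt) (fun t _ ↦ (hq t).hasDerivWithinAt)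
      (fun t _ ↦ (hq' t).hasDerivWithinAt) fun t _ ↦ by linarith [hc t]
  have hmid := hconv.2 (Set.mem_univ (x + h)) (Set.mem_univ (x - h))
    (by norm_num : (0 : ℝ) ≤ 1 / 2) (by norm_num : (0 : ℝ) ≤ 1 / 2) (by norm_num)
  simp only [smul_eq_mul] at hmid
  rw [show 1 / 2 * (x + h) + 1 / 2 * (x - h) = x by ring] at hmid
  linarith

variable {V W : Type*} [NormedAddCommGroup V] [NormedSpace ℝ V]
  [NormedAddCommGroup W] [NormedSpace ℝ W]

theorem hasDerivAt_comp_add_smul {φ : V → W} (hφ : Differentiable ℝ φ) (p v : V) (t : ℝ) :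
    HasDerivAt (fun t : ℝ ↦ φ (p + t • v)) (fderiv ℝ φ (p + t • v) v) t := by
  have hline : HasDerivAt (fun t : ℝ ↦ p + t • v) v t := by
    simpa using ((hasDerivAt_id t).smul_const v).const_add p
  exact (hφ _).hasFDerivAt.comp_hasDerivAt t hline

theorem two_mul_sub_le_add_of_neg_le_iteratedFDeriv_two {φ : V → ℝ} (hφ : ContDiff ℝ 2 φ) {c : ℝ}
    {p v : V} (hc : ∀ t : ℝ, -c ≤ iteratedFDeriv ℝ 2 φ (p + t • v) ![v, v]) :
    2 * φ p - c ≤ φ (p + v) + φ (p - v) := by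
  have hφ' : Differentiable ℝ (fderiv ℝ φ) :=
    (hφ.fderiv_right (m := 1) (by norm_num)).differentiable (by norm_num)
  have hderiv2 (t : ℝ) : HasDerivAt (fun t : ℝ ↦ fderiv ℝ φ (p + t • v) v)
      (iteratedFDeriv ℝ 2 φ (p + t • v) ![v, v]) t :=
    ((hasDerivAt_comp_add_smul hφ' p v t).clm_apply (hasDerivAt_const t v)).congr_deriv
      (by simp [iteratedFDeriv_two_apply])
  have hline := two_mul_sub_le_add_of_neg_le_deriv2
    (hasDerivAt_comp_add_smul (hφ.differentiable (by norm_num)) p v) hderiv2 hc 0 1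
  simpa [← sub_eq_add_neg] using hline

/-- The pointwise part of the condition `VT`: a positive `C²` function on a normed space whose
logarithm has Hessian at least `-1 / (2T)` in every direction. -/
structure IsLogSemiconvex (T : ℝ) (f : V → ℝ) : Prop where
  contDiff : ContDiff ℝ 2 f
  pos : ∀ x, 0 < f x
  hessian_nonneg : ∀ x v : V,
    0 ≤ 2 * T * iteratedFDeriv ℝ 2 (fun y ↦ Real.log (f y)) x ![v, v] + ‖v‖ ^ 2

theorem VT.isLogSemiconvex {N : ℕ} {T : ℝ} {u : E N → ℝ} (hu : VT N T u) : IsLogSemiconvex T u :=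
  ⟨hu.1, hu.2.2.1, hu.2.2.2.2⟩

theorem IsLogSemiconvex.two_mul_mul_exp_le_add {f : V → ℝ} {T : ℝ} (hf : IsLogSemiconvex T f)
    (hT : 0 < T) (p v : V) :
    2 * (f p * Real.exp (-‖v‖ ^ 2 / (4 * T))) ≤ f (p + v) + f (p - v) := by
  have hlog := two_mul_sub_le_add_of_neg_le_iteratedFDeriv_two (c := ‖v‖ ^ 2 / (2 * T))
    (p := p) (v := v) (hf.contDiff.log fun x ↦ (hf.pos x).ne') fun t ↦ by
      rw [← neg_div, div_le_iff₀ (by positivity)]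
      linarith [hf.hessian_nonneg (p + t • v) v]
  have hmid : Real.log (f p) + -‖v‖ ^ 2 / (4 * T) ≤
      (1 / 2) * Real.log (f (p + v)) + (1 / 2) * Real.log (f (p - v)) := by
    have hhalf : -‖v‖ ^ 2 / (4 * T) = -(‖v‖ ^ 2 / (2 * T)) / 2 := by field_simp; norm_num
    linarith
  have hexp := convexOn_exp.2 (Set.mem_univ (Real.log (f (p + v))))
    (Set.mem_univ (Real.log (f (p - v))))
    (by norm_num : (0 : ℝ) ≤ 1 / 2) (by norm_num : (0 : ℝ) ≤ 1 / 2) (by norm_num)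
  simp only [smul_eq_mul, Real.exp_log (hf.pos _)] at hexp
  have hstep := (Real.exp_le_exp.2 hmid).trans hexp
  rw [Real.exp_add, Real.exp_log (hf.pos p)] at hstep
  linarith

end Semiconvexity

section MeanValue

variable {V : Type*} [SeminormedAddCommGroup V] [MeasurableSpace V] [BorelSpace V]
  (ν : Measure V) [ν.IsAddLeftInvariant]

theorem setLIntegral_ball_comp_add_left {F : V → ℝ≥0∞} (hF : Measurable F) (p : V) (r : ℝ) :
    ∫⁻ v in ball 0 r, F (p + v) ∂ν = ∫⁻ y in ball p r, F y ∂ν := by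
  have hpre : (p + ·) ⁻¹' ball p r = ball 0 r := by simp [preimage_add_ball]
  rw [← hpre]
  exact (measurePreserving_add_left ν p).setLIntegral_comp_preimage measurableSet_ball hF

variable [ν.IsNegInvariant]

theorem setLIntegral_ball_comp_sub_left {F : V → ℝ≥0∞} (hF : Measurable F) (p : V) (r : ℝ) :
    ∫⁻ v in ball 0 r, F (p - v) ∂ν = ∫⁻ y in ball p r, F y ∂ν := by
  have hpre : (p - ·) ⁻¹' ball p r = ball 0 r := by ext; simp [dist_eq_norm]
  rw [← hpre]
  exact (ν.measurePreserving_sub_left p).setLIntegral_comp_preimage measurableSet_ball hF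

theorem mul_measure_ball_le_setLIntegral_ball {F : V → ℝ≥0∞} (hF : Measurable F) {a : ℝ≥0∞}
    {p : V} {r : ℝ} (ha : ∀ v ∈ ball (0 : V) r, 2 * a ≤ F (p + v) + F (p - v)) :
    a * ν (ball 0 r) ≤ ∫⁻ y in ball p r, F y ∂ν := by
  have hdouble : 2 * (a * ν (ball 0 r)) ≤ 2 * ∫⁻ y in ball p r, F y ∂ν :=
    calc 2 * (a * ν (ball 0 r)) = ∫⁻ _ in ball (0 : V) r, 2 * a ∂ν := by
          rw [setLIntegral_const, mul_assoc]
      _ ≤ ∫⁻ v in ball 0 r, (F (p + v) + F (p - v)) ∂ν := setLIntegral_mono' measurableSet_ball ha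
      _ = 2 * ∫⁻ y in ball p r, F y ∂ν := by
          rw [lintegral_add_left (by fun_prop : Measurable fun v ↦ F (p + v)),
            setLIntegral_ball_comp_add_left ν hF, setLIntegral_ball_comp_sub_left ν hF, two_mul]
  exact (ENNReal.mul_le_mul_iff_right two_ne_zero ENNReal.ofNat_ne_top).1 hdouble

end MeanValue

theorem neg_one_le_neg_sq_div_four_mul {x T : ℝ} (hT : 0 < T) (hx₀ : 0 ≤ x) (hx : x ≤ 2 * √T) :
    -1 ≤ -x ^ 2 / (4 * T) := by
  have hsq : x ^ 2 ≤ 4 * T :=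
    calc x ^ 2 ≤ (2 * √T) ^ 2 := by gcongr
      _ = 4 * T := by rw [mul_pow, Real.sq_sqrt hT.le]; norm_num
  rw [le_div_iff₀ (by positivity)]
  linarith

theorem IsLogSemiconvex.exp_neg_one_mul_measure_ball_mul_le_setLIntegral_ball {V : Type*}
    [NormedAddCommGroup V] [NormedSpace ℝ V] [MeasurableSpace V] [BorelSpace V]
    (ν : Measure V) [ν.IsAddLeftInvariant] [ν.IsNegInvariant]
    {f : V → ℝ} {T : ℝ} (hf : IsLogSemiconvex T f) (hT : 0 < T) (p : V) :
    ENNReal.ofReal (Real.exp (-1)) * ν (ball 0 (2 * √T)) * ENNReal.ofReal (f p) ≤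
      ∫⁻ y in ball p (2 * √T), ENNReal.ofReal (f y) ∂ν := by
  rw [mul_right_comm, ← ENNReal.ofReal_mul (Real.exp_pos _).le]
  refine mul_measure_ball_le_setLIntegral_ball ν hf.contDiff.continuous.measurable.ennreal_ofReal
    fun v hv ↦ ?_
  have hreal : 2 * (Real.exp (-1) * f p) ≤ f (p + v) + f (p - v) := by
    refine le_trans ?_ (hf.two_mul_mul_exp_le_add hT p v)
    rw [mul_comm (f p)]
    have := (hf.pos p).le
    gcongr
    exact neg_one_le_neg_sq_div_four_mul hT (norm_nonneg v) (mem_ball_zero_iff.1 hv).le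
  rw [← ENNReal.ofReal_add (hf.pos _).le (hf.pos _).le, ← ENNReal.ofReal_ofNat 2,
    ← ENNReal.ofReal_mul zero_le_two]
  exact ENNReal.ofReal_le_ofReal hreal

section Thickening

variable {X : Type*} [PseudoMetricSpace X] [SecondCountableTopology X] [MeasurableSpace X]
  [OpensMeasurableSpace X] {μ ν : Measure X} {F : X → ℝ≥0∞} {r : ℝ}

theorem measurable_uncurry_indicator_ball (hF : Measurable F) (r : ℝ) :
    Measurable (Function.uncurry fun p y ↦ (ball p r).indicator F y) :=
  (hF.comp measurable_snd).indicator
    (isOpen_lt (continuous_snd.dist continuous_fst) continuous_const).measurableSet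

theorem measurable_setLIntegral_ball [SFinite ν] (hF : Measurable F) (r : ℝ) :
    Measurable fun p ↦ ∫⁻ y in ball p r, F y ∂ν := by
  simp_rw [← lintegral_indicator measurableSet_ball]
  exact (measurable_uncurry_indicator_ball hF r).lintegral_prod_right'

theorem lintegral_setLIntegral_ball [SFinite μ] [SFinite ν] (hF : Measurable F) (r : ℝ) :
    ∫⁻ p, ∫⁻ y in ball p r, F y ∂ν ∂μ = ∫⁻ y, F y * μ (ball y r) ∂ν := by
  have hsymm (p y : X) : (ball p r).indicator F y = (ball y r).indicator (fun _ ↦ F y) p := by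
    simp only [Set.indicator, mem_ball, dist_comm]
  simp_rw [← lintegral_indicator measurableSet_ball]
  rw [lintegral_lintegral_swap (measurable_uncurry_indicator_ball hF r).aemeasurable]
  simp_rw [hsymm, lintegral_indicator_const measurableSet_ball]

theorem setLIntegral_setLIntegral_ball_le [SFinite μ] [SFinite ν] (hF : Measurable F) {b : ℝ≥0∞}
    (hball : ∀ y, μ (ball y r) ≤ b) (Ω : Set X) :
    ∫⁻ p in Ω, ∫⁻ y in ball p r, F y ∂ν ∂μ ≤ b * ∫⁻ y in thickening r Ω, F y ∂ν := by
  rw [lintegral_setLIntegral_ball hF, ← lintegral_const_mul b hF,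
    ← lintegral_indicator isOpen_thickening.measurableSet]
  refine lintegral_mono fun y ↦ ?_
  rw [Measure.restrict_apply measurableSet_ball, mul_comm]
  by_cases hy : y ∈ thickening r Ω
  · rw [Set.indicator_of_mem hy]
    gcongr
    exact (measure_mono Set.inter_subset_left).trans (hball y)
  · have hdisj : ball y r ∩ Ω = ∅ := Set.eq_empty_of_forall_notMem fun p hp ↦
      hy (mem_thickening_iff.2 ⟨p, hp.2, mem_ball'.1 hp.1⟩)
    simp [hdisj]

theorem mul_setLIntegral_le_mul_setLIntegral_thickening [SFinite ν] (hF : Measurable F)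
    (hr : 0 < r) {Ω : Set X} {a b : ℝ≥0∞}
    (hmean : ∀ p ∈ Ω, a * F p ≤ ∫⁻ y in ball p r, F y ∂ν) (hball : ∀ y, μ (ball y r) ≤ b) :
    a * ∫⁻ x in Ω, F x ∂μ ≤ b * ∫⁻ y in thickening r Ω, F y ∂ν := by
  rw [← lintegral_const_mul a hF]
  rcases eq_or_ne b ⊤ with rfl | hb
  · by_cases hzero : ∫⁻ y in thickening r Ω, F y ∂ν = 0
    · have hvanish : ∀ p ∈ Ω, a * F p ≤ 0 := fun p hp ↦
        calc a * F p ≤ ∫⁻ y in ball p r, F y ∂ν := hmean p hp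
          _ ≤ ∫⁻ y in thickening r Ω, F y ∂ν :=
            lintegral_mono_set (ball_subset_thickening hp r)
          _ = 0 := hzero
      simpa [hzero] using setLIntegral_mono (μ := μ) measurable_const hvanish
    · simp [ENNReal.top_mul hzero]
  · have : IsLocallyFiniteMeasure μ :=
      ⟨fun y ↦ ⟨ball y r, ball_mem_nhds y hr, (hball y).trans_lt hb.lt_top⟩⟩
    exact (setLIntegral_mono (measurable_setLIntegral_ball hF r) hmean).trans
      (setLIntegral_setLIntegral_ball_le hF hball Ω)

end Thickening

section Entropy

variable {V : Type*} [SeminormedAddCommGroup V] [MeasurableSpace V]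

/-- The Colding–Minicozzi entropy of real dimension `s` of a measure on a seminormed group: the
supremum of its integrals against Gaussians of all centres and scales, normalized as heat kernels
of an `s`-dimensional space. It extends `lamCM` beyond `ℝ^N` and beyond integer dimensions. -/
def coldingMinicozziEntropy (s : ℝ) (μ : Measure V) : ℝ≥0∞ :=
  ⨆ (ρ : ℝ) (_ : 0 < ρ) (x₀ : V),
    ENNReal.ofReal ((4 * Real.pi * ρ) ^ (-s / 2)) *
      ∫⁻ x, ENNReal.ofReal (Real.exp (-‖x - x₀‖ ^ 2 / (4 * ρ))) ∂μ

theorem lamCM_eq_coldingMinicozziEntropy {N : ℕ} (n : ℕ) (μ : Measure (E N)) :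
    lamCM n μ = coldingMinicozziEntropy n μ :=
  rfl

theorem gaussian_lintegral_le_coldingMinicozziEntropy (s : ℝ) (μ : Measure V) {ρ : ℝ} (hρ : 0 < ρ)
    (x₀ : V) :
    ∫⁻ x, ENNReal.ofReal (Real.exp (-‖x - x₀‖ ^ 2 / (4 * ρ))) ∂μ ≤
      ENNReal.ofReal ((4 * Real.pi * ρ) ^ (s / 2)) * coldingMinicozziEntropy s μ := by
  set I := ∫⁻ x, ENNReal.ofReal (Real.exp (-‖x - x₀‖ ^ 2 / (4 * ρ))) ∂μ
  have hscale : (4 * Real.pi * ρ) ^ (s / 2) * (4 * Real.pi * ρ) ^ (-s / 2) = 1 := by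
    rw [← Real.rpow_add (by positivity), neg_div, add_neg_cancel, Real.rpow_zero]
  calc I = ENNReal.ofReal ((4 * Real.pi * ρ) ^ (s / 2)) *
        (ENNReal.ofReal ((4 * Real.pi * ρ) ^ (-s / 2)) * I) := by
        rw [← mul_assoc, ← ENNReal.ofReal_mul (by positivity), hscale, ENNReal.ofReal_one, one_mul]
    _ ≤ ENNReal.ofReal ((4 * Real.pi * ρ) ^ (s / 2)) * coldingMinicozziEntropy s μ := by
        gcongr
        exact le_iSup₂_of_le ρ hρ (le_iSup_of_le x₀ le_rfl)

theorem measure_ball_le_coldingMinicozziEntropy [OpensMeasurableSpace V] (s : ℝ) (μ : Measure V)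
    {T : ℝ} (hT : 0 < T) (y : V) :
    μ (ball y (2 * √T)) ≤
      ENNReal.ofReal (Real.exp 1 * (4 * Real.pi * T) ^ (s / 2)) * coldingMinicozziEntropy s μ := by
  have hgauss : ∀ x ∈ ball y (2 * √T),
      1 ≤ ENNReal.ofReal (Real.exp 1) *
        ENNReal.ofReal (Real.exp (-‖x - y‖ ^ 2 / (4 * T))) := fun x hx ↦ by
    have hexponent := neg_one_le_neg_sq_div_four_mul hT (norm_nonneg (x - y))
      (mem_ball_iff_norm.1 hx).le
    rw [← ENNReal.ofReal_mul (Real.exp_pos 1).le, ENNReal.one_le_ofReal, ← Real.exp_add]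
    exact Real.one_le_exp (by linarith)
  calc μ (ball y (2 * √T)) = ∫⁻ _ in ball y (2 * √T), 1 ∂μ := by rw [setLIntegral_one]
    _ ≤ ∫⁻ x in ball y (2 * √T), ENNReal.ofReal (Real.exp 1) *
          ENNReal.ofReal (Real.exp (-‖x - y‖ ^ 2 / (4 * T))) ∂μ :=
        setLIntegral_mono' measurableSet_ball hgauss
    _ ≤ ENNReal.ofReal (Real.exp 1) *
          ∫⁻ x, ENNReal.ofReal (Real.exp (-‖x - y‖ ^ 2 / (4 * T))) ∂μ := by
        rw [lintegral_const_mul' _ _ ENNReal.ofReal_ne_top]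
        gcongr
        exact Measure.restrict_le_self
    _ ≤ ENNReal.ofReal (Real.exp 1 * (4 * Real.pi * T) ^ (s / 2)) *
          coldingMinicozziEntropy s μ := by
        rw [ENNReal.ofReal_mul (Real.exp_pos 1).le, mul_assoc]
        gcongr
        exact gaussian_lintegral_le_coldingMinicozziEntropy s μ hT y

end Entropy

section Comparison

variable {V : Type*} [NormedAddCommGroup V] [NormedSpace ℝ V] [FiniteDimensional ℝ V]
  [MeasurableSpace V] [BorelSpace V] (ν : Measure V) [ν.IsAddHaarMeasure]

theorem ofReal_rpow_finrank_eq_mul_measure_ball {T : ℝ} (hT : 0 < T) :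
    ENNReal.ofReal ((4 * Real.pi * T) ^ ((Module.finrank ℝ V : ℝ) / 2)) =
      ENNReal.ofReal (Real.pi ^ ((Module.finrank ℝ V : ℝ) / 2) / ν.real (ball 0 1)) *
        ν (ball 0 (2 * √T)) := by
  have hunit : 0 < ν.real (ball (0 : V) 1) :=
    ENNReal.toReal_pos (measure_ball_pos ν 0 one_pos).ne' measure_ball_lt_top.ne
  have hradius : 2 * √T = √(4 * T) := by
    rw [Real.sqrt_mul zero_le_four, show (4 : ℝ) = 2 ^ 2 by norm_num, Real.sqrt_sq zero_le_two]
  have hpow : (2 * √T) ^ Module.finrank ℝ V = (4 * T) ^ ((Module.finrank ℝ V : ℝ) / 2) := by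
    rw [hradius, ← Real.rpow_natCast, Real.sqrt_eq_rpow, ← Real.rpow_mul (by positivity),
      one_div_mul_eq_div]
  rw [Measure.addHaar_ball_of_pos ν 0 (by positivity), hpow,
    ← ofReal_measureReal measure_ball_lt_top.ne, ← ENNReal.ofReal_mul (by positivity),
    ← ENNReal.ofReal_mul (by positivity), mul_right_comm 4,
    Real.mul_rpow (by positivity) Real.pi_pos.le]
  congr 1
  field_simp

theorem ofReal_rpow_finrank_sub_eq_mul_measure_ball (s : ℝ) {T : ℝ} (hT : 0 < T) :
    ENNReal.ofReal ((4 * Real.pi * T) ^ (((Module.finrank ℝ V : ℝ) - s) / 2)) =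
      ENNReal.ofReal (Real.pi ^ ((Module.finrank ℝ V : ℝ) / 2) / ν.real (ball 0 1) *
        (4 * Real.pi * T) ^ (-s / 2)) * ν (ball 0 (2 * √T)) := by
  rw [sub_eq_add_neg, add_div, Real.rpow_add (by positivity), ENNReal.ofReal_mul (by positivity),
    ofReal_rpow_finrank_eq_mul_measure_ball ν hT, mul_right_comm,
    ← ENNReal.ofReal_mul (by positivity)]

theorem IsLogSemiconvex.measure_ball_mul_setLIntegral_le_coldingMinicozziEntropy_mul {f : V → ℝ}
    {T : ℝ} (hf : IsLogSemiconvex T f) (hT : 0 < T) (s : ℝ) (μ : Measure V) (Ω : Set V) :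
    ν (ball 0 (2 * √T)) * ∫⁻ x in Ω, ENNReal.ofReal (f x) ∂μ ≤
      ENNReal.ofReal (Real.exp 2 * (4 * Real.pi * T) ^ (s / 2)) * coldingMinicozziEntropy s μ *
        ∫⁻ x in thickening (2 * √T) Ω, ENNReal.ofReal (f x) ∂ν := by
  set I := ∫⁻ x in Ω, ENNReal.ofReal (f x) ∂μ
  set J := ∫⁻ x in thickening (2 * √T) Ω, ENNReal.ofReal (f x) ∂ν
  have hcompare : ENNReal.ofReal (Real.exp (-1)) * ν (ball 0 (2 * √T)) * I ≤
      ENNReal.ofReal (Real.exp 1 * (4 * Real.pi * T) ^ (s / 2)) *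
        coldingMinicozziEntropy s μ * J :=
    mul_setLIntegral_le_mul_setLIntegral_thickening
      hf.contDiff.continuous.measurable.ennreal_ofReal (by positivity)
      (fun p _ ↦ hf.exp_neg_one_mul_measure_ball_mul_le_setLIntegral_ball ν hT p)
      (measure_ball_le_coldingMinicozziEntropy s μ hT)
  calc ν (ball 0 (2 * √T)) * I
      = ENNReal.ofReal (Real.exp 1) *
          (ENNReal.ofReal (Real.exp (-1)) * ν (ball 0 (2 * √T)) * I) := by
        rw [← mul_assoc, ← mul_assoc, ← ENNReal.ofReal_mul (Real.exp_pos 1).le, ← Real.exp_add,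
          add_neg_cancel, Real.exp_zero, ENNReal.ofReal_one, one_mul]
    _ ≤ ENNReal.ofReal (Real.exp 1) *
          (ENNReal.ofReal (Real.exp 1 * (4 * Real.pi * T) ^ (s / 2)) *
            coldingMinicozziEntropy s μ * J) := mul_le_mul' le_rfl hcompare
    _ = ENNReal.ofReal (Real.exp 2 * (4 * Real.pi * T) ^ (s / 2)) *
          coldingMinicozziEntropy s μ * J := by
        rw [← mul_assoc, ← mul_assoc, ← ENNReal.ofReal_mul (Real.exp_pos 1).le, ← mul_assoc,
          ← Real.exp_add, one_add_one_eq_two]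

theorem statement_9_general :
    ∃ C : ℝ, 1 ≤ C ∧ ∀ (μ : Measure V) (s : ℝ) (Ω : Set V) (T : ℝ), 0 < T →
      ∀ f : V → ℝ, IsLogSemiconvex T f →
        ENNReal.ofReal ((4 * Real.pi * T) ^ (((Module.finrank ℝ V : ℝ) - s) / 2)) *
            ∫⁻ x in Ω, ENNReal.ofReal (f x) ∂μ ≤
          ENNReal.ofReal C * coldingMinicozziEntropy s μ *
            ∫⁻ x in thickening (2 * √T) Ω, ENNReal.ofReal (f x) ∂ν := by
  set κ : ℝ := Real.pi ^ ((Module.finrank ℝ V : ℝ) / 2) / ν.real (ball 0 1)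
  refine ⟨max 1 (κ * Real.exp 2), le_max_left _ _, fun μ s Ω T hT f hf ↦ ?_⟩
  set J := ∫⁻ x in thickening (2 * √T) Ω, ENNReal.ofReal (f x) ∂ν
  have hmerge : κ * (4 * Real.pi * T) ^ (-s / 2) * (Real.exp 2 * (4 * Real.pi * T) ^ (s / 2)) =
      κ * Real.exp 2 := by
    rw [neg_div, Real.rpow_neg (by positivity)]
    field_simp
  rw [ofReal_rpow_finrank_sub_eq_mul_measure_ball ν s hT, mul_assoc]
  calc _ ≤ ENNReal.ofReal (κ * (4 * Real.pi * T) ^ (-s / 2)) *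
          (ENNReal.ofReal (Real.exp 2 * (4 * Real.pi * T) ^ (s / 2)) *
            coldingMinicozziEntropy s μ * J) :=
        mul_le_mul' le_rfl
          (hf.measure_ball_mul_setLIntegral_le_coldingMinicozziEntropy_mul ν hT s μ Ω)
    _ = ENNReal.ofReal (κ * Real.exp 2) * coldingMinicozziEntropy s μ * J := by
        rw [← mul_assoc, ← mul_assoc, ← ENNReal.ofReal_mul (by positivity), hmerge]
    _ ≤ ENNReal.ofReal (max 1 (κ * Real.exp 2)) * coldingMinicozziEntropy s μ * J := by
        gcongr
        exact le_max_right _ _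

end Comparison

/-- there is `C₃ = C₃(N) ≥ 1` so that for every Borel measure `μ`, every
`n ≥ 1`, nonempty open `Ω`, `T > 0` and `f ∈ 𝒱𝒯₁⁺(T)`:
`(4πT)^{(N-n)/2} ∫_Ω f dμ ≤ C₃ λ_CM^n[μ] ∫_{𝒯_{2√T}(Ω)} f dL^N`, where
`𝒯_r(Ω) = ⋃_{p ∈ Ω} B_r(p)`. -/
theorem statement_9 (N : ℕ) (hN : 1 ≤ N) :
    ∃ C₃ : ℝ, 1 ≤ C₃ ∧
      ∀ (μ : Measure (E N)) (n : ℕ), 1 ≤ n →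
        ∀ Ω : Set (E N), IsOpen Ω → Ω.Nonempty →
          ∀ T : ℝ, 0 < T → ∀ f : E N → ℝ, VT N T f →
            ENNReal.ofReal ((4 * Real.pi * T) ^ (((N : ℝ) - n) / 2)) *
                (∫⁻ x in Ω, ENNReal.ofReal (f x) ∂μ) ≤
              ENNReal.ofReal C₃ * lamCM n μ *
                ∫⁻ x in ⋃ p ∈ Ω, Metric.ball p (2 * Real.sqrt T),
                  ENNReal.ofReal (f x) := by
  obtain ⟨C, hC, hbound⟩ := statement_9_general (volume : Measure (E N))
  exact ⟨C, hC, fun μ n _ Ω _ _ T hT f hf ↦ by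
    simpa only [finrank_euclideanSpace_fin, thickening_eq_biUnion_ball,
      lamCM_eq_coldingMinicozziEntropy] using
      hbound μ n Ω T hT f hf.isLogSemiconvex⟩
end
end

section
/- For every N ≥ 1 there is a constant C₃ = C₃(N) ≥ 1 such that for every Borel measure μ on ℝ^N and every integer n ≥ 1, λ_CM^n[μ] ≤ λ_V^n[μ] ≤ C₃ λ_CM^n[μ]. -/
open MeasureTheory Filter Metric
open scoped ENNReal NNReal Topology

noncomputable section

/-!
A function `u ∈ 𝒱𝒯₁⁺(T)` is controlled by its own heat flow: `u ≤ 2^{N/2} H_T u`. Indeed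
`log u + |x|²/(4T)` is convex, so the parallelogram law and the arithmetic-geometric mean
inequality give `u(x) exp(-|x-y|²/(4T)) ≤ (u(y) + u(2x-y))/2`. Integrating this in `y` against the
heat kernel `H(T,x,y)`, which is invariant under the point reflection `y ↦ 2x-y`, yields the claim,
the factor `2^{N/2}` coming from `exp(-|x-y|²/(4T)) H(T,x,y) = 2^{-N/2} H(T/2,x,y)`. Integrating
against `μ` and exchanging the integrals then bounds the virtual entropy by an average of Gaussian
integrals of `μ`, each of which is at most `λ_CM^n[μ]`; Fubini's theorem applies because
`λ_CM^n[μ] < ∞` forces `μ` to be s-finite. Conversely, the heat kernels themselves belong to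
`𝒱𝒯₁⁺(T)`, and testing `λ_V^n[μ]` on them gives `λ_CM^n[μ]`.
-/

theorem convexOn_univ_of_iteratedFDeriv_two_nonneg {F : Type*} [NormedAddCommGroup F]
    [NormedSpace ℝ F] {f : F → ℝ} (hf : ContDiff ℝ 2 f)
    (hess : ∀ x v : F, 0 ≤ iteratedFDeriv ℝ 2 f x ![v, v]) : ConvexOn ℝ Set.univ f := by
  have hf₁ : Differentiable ℝ f := hf.differentiable two_ne_zero
  have hf₂ : Differentiable ℝ (fderiv ℝ f) :=
    (hf.fderiv_right (m := 1) one_add_one_eq_two.le).differentiable one_ne_zero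
  refine ⟨convex_univ, fun x _ y _ a b ha hb hab => ?_⟩
  set v := y - x
  have hline (t : ℝ) : HasDerivAt (fun t : ℝ => x + t • v) v t := by
    simpa using ((hasDerivAt_id t).smul_const v).const_add x
  have hderiv (t : ℝ) : HasDerivAt (fun t : ℝ => f (x + t • v)) (fderiv ℝ f (x + t • v) v) t :=
    (hf₁ _).hasFDerivAt.comp_hasDerivAt t (hline t)
  have hderiv₂ (t : ℝ) : HasDerivAt (fun t : ℝ => fderiv ℝ f (x + t • v) v)
      (fderiv ℝ (fderiv ℝ f) (x + t • v) v v) t := by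
    simpa using ((hf₂ _).hasFDerivAt.comp_hasDerivAt t (hline t)).clm_apply (hasDerivAt_const t v)
  have hconvex : ConvexOn ℝ Set.univ fun t : ℝ => f (x + t • v) :=
    convexOn_of_hasDerivWithinAt2_nonneg convex_univ
      (fun t _ => (hderiv t).continuousAt.continuousWithinAt)
      (fun t _ => (hderiv t).hasDerivWithinAt) (fun t _ => (hderiv₂ t).hasDerivWithinAt)
      fun t _ => by simpa [iteratedFDeriv_two_apply] using hess (x + t • v) v
  have hpoint : x + b • v = a • x + b • y := by
    rw [eq_sub_of_add_eq hab]
    module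
  simpa [hpoint, v] using hconvex.2 (Set.mem_univ 0) (Set.mem_univ 1) ha hb hab

section InnerProductSpace

variable {F : Type*} [NormedAddCommGroup F] [InnerProductSpace ℝ F]

theorem contDiff_norm_sub_sq {n : WithTop ℕ∞} (x₀ : F) : ContDiff ℝ n fun x => ‖x - x₀‖ ^ 2 :=
  (contDiff_id.sub contDiff_const).norm_sq ℝ

theorem iteratedFDeriv_two_norm_sub_sq (x₀ x v : F) :
    iteratedFDeriv ℝ 2 (fun y => ‖y - x₀‖ ^ 2) x ![v, v] = 2 * ‖v‖ ^ 2 := by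
  have hsub (y : F) : HasFDerivAt (fun y => y - x₀) (ContinuousLinearMap.id ℝ F) y :=
    (hasFDerivAt_id y).sub_const x₀
  have hderiv : fderiv ℝ (fun y => ‖y - x₀‖ ^ 2) = fun y => (2 : ℝ) • innerSL ℝ (y - x₀) := by
    funext y
    simpa [two_smul] using (hsub y).norm_sq.fderiv
  have hinner : HasFDerivAt (fun y => innerSL ℝ (y - x₀)) (innerSL ℝ : F →L[ℝ] F →L[ℝ] ℝ) x :=
    (innerSL ℝ : F →L[ℝ] F →L[ℝ] ℝ).hasFDerivAt.comp x (hsub x)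
  rw [iteratedFDeriv_two_apply, hderiv, (hinner.fun_const_smul (2 : ℝ)).fderiv]
  exact congrArg (2 * ·) (real_inner_self_eq_norm_sq v)

theorem iteratedFDeriv_two_add_const_mul_norm_sub_sq {f : F → ℝ} (hf : ContDiff ℝ 2 f)
    (a : ℝ) (x₀ x v : F) :
    iteratedFDeriv ℝ 2 (fun y => f y + a * ‖y - x₀‖ ^ 2) x ![v, v] =
      iteratedFDeriv ℝ 2 f x ![v, v] + 2 * a * ‖v‖ ^ 2 := by
  have hsq : ContDiff ℝ 2 fun y : F => a • ‖y - x₀‖ ^ 2 := (contDiff_norm_sub_sq x₀).const_smul a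
  have hadd := iteratedFDeriv_add_apply (x := x) hf.contDiffAt hsq.contDiffAt
  have hsmul := iteratedFDeriv_const_smul_apply (a := a) (x := x)
    (contDiff_norm_sub_sq (n := 2) x₀).contDiffAt
  simp only [Pi.add_def, Pi.smul_def, smul_eq_mul] at hadd hsmul
  rw [hadd, hsmul, add_apply, smul_apply,
    iteratedFDeriv_two_norm_sub_sq, smul_eq_mul]
  ring

theorem two_mul_sub_le_add_of_convexOn_add_norm_sq {f : F → ℝ} {a : ℝ}
    (hf : ConvexOn ℝ Set.univ fun x => f x + a * ‖x‖ ^ 2) (x z : F) :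
    2 * f x - 2 * a * ‖z‖ ^ 2 ≤ f (x + z) + f (x - z) := by
  have hmid := hf.2 (Set.mem_univ (x + z)) (Set.mem_univ (x - z)) (by norm_num : (0 : ℝ) ≤ 1 / 2)
    (by norm_num : (0 : ℝ) ≤ 1 / 2) (by norm_num)
  have hpoint : (1 / 2 : ℝ) • (x + z) + (1 / 2 : ℝ) • (x - z) = x := by module
  have hparallelogram := congrArg (a * ·) (parallelogram_law_with_norm ℝ x z)
  simp only [hpoint, smul_eq_mul] at hmid hparallelogram
  linarith

end InnerProductSpace

theorem sFinite_of_lintegral_ne_top {α : Type*} [MeasurableSpace α] {μ : Measure α}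
    {f : α → ℝ≥0∞} (hf : AEMeasurable f μ) (hf₀ : ∀ᵐ x ∂μ, f x ≠ 0) (hfi : ∫⁻ x, f x ∂μ ≠ ∞) :
    SFinite μ :=
  have := isFiniteMeasure_withDensity hfi
  sFinite_of_absolutelyContinuous (withDensity_absolutelyContinuous' hf hf₀)

section HeatKernel

variable {N : ℕ} {t : ℝ}

theorem heatKernel_pos (ht : 0 < t) (x y : E N) : 0 < heatKernel N t x y := by
  unfold heatKernel
  positivity

theorem heatKernel_le (ht : 0 < t) (x y : E N) :
    heatKernel N t x y ≤ (4 * Real.pi * t) ^ (-(N : ℝ) / 2) := by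
  refine mul_le_of_le_one_right (by positivity) (Real.exp_le_one_iff.2 ?_)
  exact div_nonpos_of_nonpos_of_nonneg (neg_nonpos.2 (sq_nonneg _)) (by positivity)

theorem measurable_heatKernel : Measurable fun p : E N × E N => heatKernel N t p.1 p.2 := by
  unfold heatKernel
  fun_prop

theorem contDiff_heatKernel {n : WithTop ℕ∞} (y : E N) :
    ContDiff ℝ n fun x => heatKernel N t x y :=
  contDiff_const.mul ((contDiff_norm_sub_sq y).neg.div_const _).exp

theorem heatKernel_comm (x y : E N) : heatKernel N t x y = heatKernel N t y x := by
  simp only [heatKernel, norm_sub_rev]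

theorem heatKernel_pointReflection (x y : E N) :
    heatKernel N t x (x + x - y) = heatKernel N t x y := by
  rw [heatKernel_comm]
  simp only [heatKernel, show x + x - y - x = x - y by abel]

theorem integral_heatKernel (ht : 0 < t) (y : E N) : ∫ x, heatKernel N t x y = 1 := by
  have hpos : 0 < 4 * Real.pi * t := by positivity
  have hgauss : ∫ z : E N, Real.exp (-‖z‖ ^ 2 / (4 * t)) =
      (4 * Real.pi * t) ^ ((N : ℝ) / 2) := by
    have h := GaussianFourier.integral_rexp_neg_mul_sq_norm (V := E N) (b := 1 / (4 * t))
      (by positivity)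
    rw [finrank_euclideanSpace_fin, show Real.pi / (1 / (4 * t)) = 4 * Real.pi * t by
      field_simp] at h
    rw [← h]
    congr with z
    ring_nf
  calc ∫ x, heatKernel N t x y
      = (4 * Real.pi * t) ^ (-(N : ℝ) / 2) * ∫ z : E N, Real.exp (-‖z‖ ^ 2 / (4 * t)) := by
        simp only [heatKernel, integral_const_mul]
        rw [integral_sub_right_eq_self fun z : E N => Real.exp (-‖z‖ ^ 2 / (4 * t))]
    _ = 1 := by rw [hgauss, ← Real.rpow_add hpos, neg_div, neg_add_cancel, Real.rpow_zero]

theorem integrable_heatKernel (ht : 0 < t) (y : E N) : Integrable fun x => heatKernel N t x y :=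
  integrable_of_integral_eq_one (integral_heatKernel ht y)

theorem exp_mul_heatKernel (ht : 0 < t) (x y : E N) :
    Real.exp (-‖x - y‖ ^ 2 / (4 * t)) * heatKernel N t x y =
      2 ^ (-(N : ℝ) / 2) * heatKernel N (t / 2) x y := by
  have hexp : Real.exp (-‖x - y‖ ^ 2 / (4 * (t / 2))) =
      Real.exp (-‖x - y‖ ^ 2 / (4 * t)) * Real.exp (-‖x - y‖ ^ 2 / (4 * t)) := by
    rw [← Real.exp_add]
    congr 1
    field_simp
    ring
  have hscale : (4 * Real.pi * t) ^ (-(N : ℝ) / 2) =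
      2 ^ (-(N : ℝ) / 2) * (4 * Real.pi * (t / 2)) ^ (-(N : ℝ) / 2) := by
    rw [← Real.mul_rpow two_pos.le (by positivity)]
    congr 1
    ring
  rw [heatKernel, heatKernel, hexp, hscale]
  ring

theorem log_heatKernel (ht : 0 < t) (x y : E N) :
    Real.log (heatKernel N t x y) =
      Real.log ((4 * Real.pi * t) ^ (-(N : ℝ) / 2)) + -(1 / (4 * t)) * ‖x - y‖ ^ 2 := by
  rw [heatKernel, Real.log_mul (by positivity) (Real.exp_pos _).ne', Real.log_exp]
  ring

theorem VT_heatKernel (ht : 0 < t) (y : E N) : VT N t fun x => heatKernel N t x y := by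
  refine ⟨contDiff_heatKernel y, integrable_heatKernel ht y, fun x => heatKernel_pos ht x y,
    integral_heatKernel ht y, fun x v => ?_⟩
  simp only [log_heatKernel ht]
  rw [iteratedFDeriv_two_add_const_mul_norm_sub_sq contDiff_const,
    iteratedFDeriv_const_of_ne two_ne_zero, Pi.zero_apply, zero_apply]
  refine Eq.ge ?_
  field_simp
  ring

end HeatKernel

section HeatFlow

variable {N : ℕ} {t : ℝ} {u : E N → ℝ}

theorem heatFlow_of_pos (ht : 0 < t) (u : E N → ℝ) (x : E N) :
    heatFlow N u t x = ∫ y, u y * heatKernel N t x y :=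
  if_neg ht.ne'

theorem integrable_mul_heatKernel (ht : 0 < t) (hu : Integrable u) (x : E N) :
    Integrable fun y => u y * heatKernel N t x y :=
  hu.mul_bdd (measurable_heatKernel.comp measurable_prodMk_left).aestronglyMeasurable
    (ae_of_all _ fun y => by
      rw [Real.norm_of_nonneg (heatKernel_pos ht x y).le]
      exact heatKernel_le ht x y)

theorem lintegral_heatFlow (ht : 0 < t) (hu : Integrable u) (hu₀ : ∀ y, 0 ≤ u y)
    (μ : Measure (E N)) [SFinite μ] :
    ∫⁻ x, ENNReal.ofReal (heatFlow N u t x) ∂μ =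
      ∫⁻ y, ENNReal.ofReal (u y) * ∫⁻ x, ENNReal.ofReal (heatKernel N t x y) ∂μ := by
  calc ∫⁻ x, ENNReal.ofReal (heatFlow N u t x) ∂μ
      = ∫⁻ x, (∫⁻ y, ENNReal.ofReal (u y) * ENNReal.ofReal (heatKernel N t x y)) ∂μ := by
        refine lintegral_congr fun x => ?_
        simp only [← ENNReal.ofReal_mul (hu₀ _)]
        rw [heatFlow_of_pos ht, ofReal_integral_eq_lintegral_ofReal
          (integrable_mul_heatKernel ht hu x)
          (ae_of_all _ fun y => mul_nonneg (hu₀ y) (heatKernel_pos ht x y).le)]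
    _ = ∫⁻ y, ∫⁻ x, ENNReal.ofReal (u y) * ENNReal.ofReal (heatKernel N t x y) ∂μ :=
        lintegral_lintegral_swap (hu.1.aemeasurable.ennreal_ofReal.comp_snd.mul
          measurable_heatKernel.ennreal_ofReal.aemeasurable)
    _ = _ := lintegral_congr fun y => lintegral_const_mul' _ _ ENNReal.ofReal_ne_top

end HeatFlow

namespace VT

variable {N : ℕ} {T : ℝ} {u : E N → ℝ}

theorem lintegral_eq_one (hu : VT N T u) : ∫⁻ x, ENNReal.ofReal (u x) = 1 := by
  obtain ⟨-, hint, hpos, hmass, -⟩ := hu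
  rw [← ofReal_integral_eq_lintegral_ofReal hint (ae_of_all _ fun x => (hpos x).le), hmass,
    ENNReal.ofReal_one]

theorem convexOn_log_add_norm_sq (hT : 0 < T) (hu : VT N T u) :
    ConvexOn ℝ Set.univ fun x => Real.log (u x) + 1 / (4 * T) * ‖x‖ ^ 2 := by
  obtain ⟨hC, -, hpos, -, hess⟩ := hu
  have hlog : ContDiff ℝ 2 fun x => Real.log (u x) := hC.log fun x => (hpos x).ne'
  suffices h : ConvexOn ℝ Set.univ fun x => Real.log (u x) + 1 / (4 * T) * ‖x - 0‖ ^ 2 by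
    simpa only [sub_zero] using h
  refine convexOn_univ_of_iteratedFDeriv_two_nonneg
    (hlog.add (contDiff_const.mul (contDiff_norm_sub_sq 0))) fun x v => ?_
  rw [iteratedFDeriv_two_add_const_mul_norm_sub_sq hlog]
  refine (div_nonneg (hess x v) (by positivity : 0 ≤ 2 * T)).trans_eq ?_
  field_simp
  ring

theorem mul_exp_le_add_div_two (hT : 0 < T) (hu : VT N T u) (x z : E N) :
    u x * Real.exp (-‖z‖ ^ 2 / (4 * T)) ≤ (u (x + z) + u (x - z)) / 2 := by
  have hmid := two_mul_sub_le_add_of_convexOn_add_norm_sq (hu.convexOn_log_add_norm_sq hT) x z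
  have hexp (y : E N) : Real.exp (Real.log (u y)) = u y := Real.exp_log (hu.2.2.1 y)
  have hamgm := convexOn_exp.2 (Set.mem_univ (Real.log (u (x + z))))
    (Set.mem_univ (Real.log (u (x - z)))) (by norm_num : (0 : ℝ) ≤ 1 / 2)
    (by norm_num : (0 : ℝ) ≤ 1 / 2) (by norm_num)
  simp only [hexp, smul_eq_mul] at hamgm
  calc u x * Real.exp (-‖z‖ ^ 2 / (4 * T))
      = Real.exp (Real.log (u x) + -‖z‖ ^ 2 / (4 * T)) := by rw [Real.exp_add, hexp]
    _ ≤ Real.exp (1 / 2 * Real.log (u (x + z)) + 1 / 2 * Real.log (u (x - z))) := by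
        refine Real.exp_le_exp.2 ?_
        linear_combination hmid / 2
    _ ≤ (u (x + z) + u (x - z)) / 2 := by linear_combination hamgm

theorem mul_heatKernel_half_le (hT : 0 < T) (hu : VT N T u) (x y : E N) :
    u x * 2 ^ (-(N : ℝ) / 2) * heatKernel N (T / 2) x y ≤
      (u (x + x - y) * heatKernel N T x y + u y * heatKernel N T x y) / 2 := by
  have h := mul_le_mul_of_nonneg_right (hu.mul_exp_le_add_div_two hT x (x - y))
    (heatKernel_pos hT x y).le
  rw [mul_assoc, exp_mul_heatKernel hT, ← add_sub_assoc, sub_sub_cancel] at h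
  linear_combination h

theorem le_two_rpow_mul_heatFlow (hT : 0 < T) (hu : VT N T u) (x : E N) :
    u x ≤ 2 ^ ((N : ℝ) / 2) * heatFlow N u T x := by
  have hint := integrable_mul_heatKernel hT hu.2.1 x
  have hreflect : (fun y => u (x + x - y) * heatKernel N T x y) =
      fun y => (fun y => u y * heatKernel N T x y) (x + x - y) := by
    simp only [heatKernel_pointReflection]
  have hint' : Integrable fun y => u (x + x - y) * heatKernel N T x y :=
    hreflect ▸ hint.comp_sub_left (x + x)
  have hkernel : Integrable fun y => heatKernel N (T / 2) x y := by
    simpa only [heatKernel_comm x] using integrable_heatKernel (half_pos hT) x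
  have hmass : ∫ y, heatKernel N (T / 2) x y = 1 := by
    simpa only [heatKernel_comm x] using integral_heatKernel (half_pos hT) x
  have hmean : u x * 2 ^ (-(N : ℝ) / 2) ≤ heatFlow N u T x := by
    calc u x * 2 ^ (-(N : ℝ) / 2)
        = ∫ y, u x * 2 ^ (-(N : ℝ) / 2) * heatKernel N (T / 2) x y := by
          rw [integral_const_mul, hmass, mul_one]
      _ ≤ ∫ y, (u (x + x - y) * heatKernel N T x y + u y * heatKernel N T x y) / 2 :=
          integral_mono (hkernel.const_mul _) ((hint'.add hint).div_const 2)
            (hu.mul_heatKernel_half_le hT x)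
      _ = heatFlow N u T x := by
          rw [integral_div, integral_add hint' hint, hreflect,
            integral_sub_left_eq_self (fun y => u y * heatKernel N T x y), add_self_div_two,
            heatFlow_of_pos hT]
  rw [neg_div, Real.rpow_neg two_pos.le, ← div_eq_mul_inv, div_le_iff₀ (by positivity)] at hmean
  rwa [mul_comm]

end VT

section Entropy

variable {N : ℕ} (n : ℕ) (μ : Measure (E N))

theorem lamCM_eq_iSup_heatKernel :
    lamCM n μ = ⨆ (ρ : ℝ) (_ : 0 < ρ) (y : E N),
      ENNReal.ofReal ((4 * Real.pi * ρ) ^ (((N : ℝ) - n) / 2)) *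
        ∫⁻ x, ENNReal.ofReal (heatKernel N ρ x y) ∂μ := by
  refine iSup_congr fun ρ => iSup_congr fun hρ => iSup_congr fun y => ?_
  have hpos : 0 < 4 * Real.pi * ρ := by positivity
  simp_rw [heatKernel, ENNReal.ofReal_mul (Real.rpow_nonneg hpos.le _)]
  rw [lintegral_const_mul' _ _ ENNReal.ofReal_ne_top, ← mul_assoc,
    ← ENNReal.ofReal_mul (Real.rpow_nonneg hpos.le _), ← Real.rpow_add hpos,
    show ((N : ℝ) - n) / 2 + -(N : ℝ) / 2 = -(n : ℝ) / 2 by ring]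

theorem mul_lintegral_heatKernel_le_lamCM {ρ : ℝ} (hρ : 0 < ρ) (y : E N) :
    ENNReal.ofReal ((4 * Real.pi * ρ) ^ (((N : ℝ) - n) / 2)) *
      ∫⁻ x, ENNReal.ofReal (heatKernel N ρ x y) ∂μ ≤ lamCM n μ := by
  rw [lamCM_eq_iSup_heatKernel]
  exact le_iSup₂_of_le ρ hρ (le_iSup_of_le y le_rfl)

theorem lamCM_le_lamV : lamCM n μ ≤ lamV n μ := by
  rw [lamCM_eq_iSup_heatKernel]
  exact iSup₂_le fun ρ hρ => iSup_le fun y =>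
    le_iSup₂_of_le ρ hρ (le_iSup₂_of_le _ (VT_heatKernel hρ y) le_rfl)

variable {n μ}

theorem sFinite_of_lamCM_ne_top (h : lamCM n μ ≠ ∞) : SFinite μ := by
  have hfinite := ne_top_of_le_ne_top h (mul_lintegral_heatKernel_le_lamCM n μ one_pos 0)
  refine sFinite_of_lintegral_ne_top (f := fun x => ENNReal.ofReal (heatKernel N 1 x 0))
    (measurable_heatKernel.comp measurable_prodMk_right).ennreal_ofReal.aemeasurable
    (ae_of_all _ fun x => (ENNReal.ofReal_pos.2 (heatKernel_pos one_pos x 0)).ne')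
    (ENNReal.lt_top_of_mul_ne_top_right hfinite ?_).ne
  exact (ENNReal.ofReal_pos.2 (by positivity)).ne'

theorem VT.mul_lintegral_le_mul_lamCM [SFinite μ] {T : ℝ} (hT : 0 < T) {u : E N → ℝ}
    (hu : VT N T u) :
    ENNReal.ofReal ((4 * Real.pi * T) ^ (((N : ℝ) - n) / 2)) * ∫⁻ x, ENNReal.ofReal (u x) ∂μ ≤
      ENNReal.ofReal (2 ^ ((N : ℝ) / 2)) * lamCM n μ := by
  set c := ENNReal.ofReal ((4 * Real.pi * T) ^ (((N : ℝ) - n) / 2))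
  set C := ENNReal.ofReal (2 ^ ((N : ℝ) / 2))
  have hflow : ∫⁻ x, ENNReal.ofReal (u x) ∂μ ≤
      C * ∫⁻ x, ENNReal.ofReal (heatFlow N u T x) ∂μ := by
    rw [← lintegral_const_mul' _ _ ENNReal.ofReal_ne_top]
    refine lintegral_mono fun x => ?_
    rw [← ENNReal.ofReal_mul (by positivity)]
    exact ENNReal.ofReal_le_ofReal (hu.le_two_rpow_mul_heatFlow hT x)
  calc c * ∫⁻ x, ENNReal.ofReal (u x) ∂μ
      ≤ c * (C * ∫⁻ x, ENNReal.ofReal (heatFlow N u T x) ∂μ) := by gcongr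
    _ = C * (c * ∫⁻ x, ENNReal.ofReal (heatFlow N u T x) ∂μ) := mul_left_comm _ _ _
    _ = C * ∫⁻ y, ENNReal.ofReal (u y) *
          (c * ∫⁻ x, ENNReal.ofReal (heatKernel N T x y) ∂μ) := by
        rw [lintegral_heatFlow hT hu.2.1 (fun y => (hu.2.2.1 y).le),
          ← lintegral_const_mul' c _ ENNReal.ofReal_ne_top]
        simp only [mul_left_comm c]
    _ ≤ C * ∫⁻ y, ENNReal.ofReal (u y) * lamCM n μ := by
        gcongr with y
        exact mul_lintegral_heatKernel_le_lamCM n μ hT y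
    _ = C * lamCM n μ := by
        rw [lintegral_mul_const _ hu.1.continuous.measurable.ennreal_ofReal, hu.lintegral_eq_one,
          one_mul]

variable (n μ)

theorem lamV_le_mul_lamCM : lamV n μ ≤ ENNReal.ofReal (2 ^ ((N : ℝ) / 2)) * lamCM n μ := by
  by_cases h : lamCM n μ = ∞
  · rw [h, ENNReal.mul_top (ENNReal.ofReal_pos.2 (by positivity)).ne']
    exact le_top
  · have := sFinite_of_lamCM_ne_top h
    exact iSup₂_le fun T hT => iSup₂_le fun u hu => hu.mul_lintegral_le_mul_lamCM hT

end Entropy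

/-- there is `C₃ = C₃(N) ≥ 1` so that `λ_CM^n[μ] ≤ λ_V^n[μ] ≤ C₃ λ_CM^n[μ]`
for every Borel measure `μ` on `ℝ^N` and every `n ≥ 1`. -/
theorem statement_10 (N : ℕ) (hN : 1 ≤ N) :
    ∃ C₃ : ℝ, 1 ≤ C₃ ∧
      ∀ (μ : Measure (E N)) (n : ℕ), 1 ≤ n →
        lamCM n μ ≤ lamV n μ ∧ lamV n μ ≤ ENNReal.ofReal C₃ * lamCM n μ :=
  ⟨2 ^ ((N : ℝ) / 2), Real.one_le_rpow one_le_two (by positivity), fun μ n _ =>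
    ⟨lamCM_le_lamV n μ, lamV_le_mul_lamCM n μ⟩⟩
end
end

section
/- Let Σ ⊆ ℝ^N be a Borel set, n ≥ 1 an integer, and let Σ' = F(Σ) where F(x) = ρ R x + b for some rotation R ∈ O(N), some ρ > 0 and some b ∈ ℝ^N. Then λ_V^n[ℋ^n⌞Σ'] = λ_V^n[ℋ^n⌞Σ]. -/
open MeasureTheory Filter Metric
open scoped ENNReal NNReal Topology

noncomputable section

/-! If `F x = ρ • R x + b` and `u ∈ 𝒱𝒯₁⁺(T)`, then `|ρ|^N u ∘ F ∈ 𝒱𝒯₁⁺(T / ρ²)`: the factor `|ρ|^N`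
restores unit mass, drops out of the Hessian of the logarithm, and that Hessian picks up `ρ²`.
Since `F` multiplies `ℋⁿ` by `|ρ|ⁿ`, the powers of `|ρ|` in the weighted integral of `u` against the
image measure are exactly those in the weighted integral of `|ρ|^N u ∘ F`. Hence the entropy does
not increase under `F`, and applying this to `F⁻¹` gives equality. -/

section Calculus

variable {𝕜 V V' Y : Type*} [NontriviallyNormedField 𝕜]
  [NormedAddCommGroup V] [NormedSpace 𝕜 V] [NormedAddCommGroup V'] [NormedSpace 𝕜 V']
  [NormedAddCommGroup Y] [NormedSpace 𝕜 Y]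

theorem iteratedFDeriv_const_add {i : ℕ} (hi : i ≠ 0) (c : Y) (f : V → Y) :
    iteratedFDeriv 𝕜 i (fun x => c + f x) = iteratedFDeriv 𝕜 i f := by
  obtain ⟨k, rfl⟩ := Nat.exists_eq_succ_of_ne_zero hi
  ext x m
  simp only [iteratedFDeriv_succ_apply_right, fderiv_const_add]

theorem iteratedFDeriv_comp_smul_add {n : WithTop ℕ∞} {f : V' → Y} (hf : ContDiff 𝕜 n f)
    {i : ℕ} (hi : i ≤ n) (L : V →L[𝕜] V') (c : 𝕜) (b : V') (x : V) (m : Fin i → V) :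
    iteratedFDeriv 𝕜 i (fun y => f (c • L y + b)) x m =
      c ^ i • iteratedFDeriv 𝕜 i f (c • L x + b) (fun j => L (m j)) := by
  have hfb : ContDiff 𝕜 n (fun y => f (y + b)) := hf.comp (contDiff_id.add contDiff_const)
  change iteratedFDeriv 𝕜 i ((fun y => f (y + b)) ∘ (c • L)) x m = _
  rw [(c • L).iteratedFDeriv_comp_right hfb x hi, iteratedFDeriv_comp_add_right]
  change iteratedFDeriv 𝕜 i f (c • L x + b) (fun j => c • L (m j)) = _
  rw [ContinuousMultilinearMap.map_smul_univ _ (fun _ => c), Finset.prod_const,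
    Finset.card_univ, Fintype.card_fin]

end Calculus

theorem iteratedFDeriv_log_const_mul {V : Type*} [NormedAddCommGroup V] [NormedSpace ℝ V]
    {i : ℕ} (hi : i ≠ 0) {c : ℝ} (hc : c ≠ 0) {u : V → ℝ} (hu : ∀ x, u x ≠ 0) :
    iteratedFDeriv ℝ i (fun x => Real.log (c * u x)) =
      iteratedFDeriv ℝ i (fun x => Real.log (u x)) := by
  simp only [Real.log_mul hc (hu _), iteratedFDeriv_const_add hi]

section Similarity

variable {𝕜 V V' : Type*} [NormedField 𝕜] [NormedAddCommGroup V] [NormedSpace 𝕜 V]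
  [NormedAddCommGroup V'] [NormedSpace 𝕜 V']

/-- The similarity `x ↦ ρ R x + b` with linear part `ρ R`, where `R` is a linear isometry and
`ρ ≠ 0`, as a homeomorphism. -/
def similarity (R : V ≃ₗᵢ[𝕜] V') {ρ : 𝕜} (hρ : ρ ≠ 0) (b : V') : V ≃ₜ V' :=
  (R.toHomeomorph.trans (Homeomorph.smulOfNeZero ρ hρ)).trans (Homeomorph.addRight b)

variable (R : V ≃ₗᵢ[𝕜] V') {ρ : 𝕜} (hρ : ρ ≠ 0) (b : V')

theorem coe_similarity : ⇑(similarity R hρ b) = fun x => ρ • R x + b :=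
  rfl

theorem similarity_symm :
    (similarity R hρ b).symm = similarity R.symm (inv_ne_zero hρ) (-(ρ⁻¹ • R.symm b)) := by
  ext x
  refine (similarity R hρ b).injective ?_
  simp [coe_similarity, smul_smul, hρ]

variable [MeasurableSpace V] [BorelSpace V] [MeasurableSpace V'] [BorelSpace V']

theorem map_similarity (μ : Measure V) :
    μ.map (similarity R hρ b) = ((μ.map R).map (ρ • ·)).map (· + b) := by
  have hsmul : Measurable fun x : V' => ρ • x := (continuous_const_smul ρ).measurable
  have hadd : Measurable fun x : V' => x + b := (continuous_add_const b).measurable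
  rw [Measure.map_map hsmul R.continuous.measurable,
    Measure.map_map hadd (hsmul.comp R.continuous.measurable)]
  rfl

theorem map_similarity_hausdorffMeasure {d : ℝ} (hd : 0 ≤ d) :
    (μH[d] : Measure V).map (similarity R hρ b) = ‖ρ‖₊⁻¹ ^ d • μH[d] := by
  have hsmul : (μH[d] : Measure V').map (ρ • ·) = ‖ρ‖₊⁻¹ ^ d • μH[d] := by
    convert map_homothety_hausdorffMeasure hd (0 : V') hρ using 2
    ext x
    simp [AffineMap.homothety_apply]
  have hR : (μH[d] : Measure V).map R = μH[d] := R.toIsometryEquiv.map_hausdorffMeasure d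
  have hadd : (μH[d] : Measure V').map (· + b) = μH[d] :=
    (IsometryEquiv.addRight b).map_hausdorffMeasure d
  rw [map_similarity, hR, hsmul, Measure.map_smul, hadd]

theorem hausdorffMeasure_restrict_image_similarity {d : ℝ} (hd : 0 ≤ d) (S : Set V) :
    μH[d].restrict (similarity R hρ b '' S) =
      ‖ρ‖₊ ^ d • (μH[d].restrict S).map (similarity R hρ b) := by
  have hmul : ‖ρ‖₊ ^ d * ‖ρ‖₊⁻¹ ^ d = 1 := by
    rw [← NNReal.mul_rpow, mul_inv_cancel₀ (nnnorm_ne_zero_iff.2 hρ), NNReal.one_rpow]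
  calc μH[d].restrict (similarity R hρ b '' S)
      = ‖ρ‖₊ ^ d • ((μH[d] : Measure V).map (similarity R hρ b)).restrict
          (similarity R hρ b '' S) := by
        rw [map_similarity_hausdorffMeasure R hρ b hd, Measure.restrict_smul, smul_smul, hmul,
          one_smul]
    _ = ‖ρ‖₊ ^ d • (μH[d].restrict S).map (similarity R hρ b) := by
        rw [(similarity R hρ b).measurableEmbedding.restrict_map,
          (similarity R hρ b).preimage_image]

end Similarity

theorem iteratedFDeriv_log_const_mul_comp_similarity {V V' : Type*} [NormedAddCommGroup V]
    [NormedSpace ℝ V] [NormedAddCommGroup V'] [NormedSpace ℝ V'] (R : V ≃ₗᵢ[ℝ] V') {ρ : ℝ}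
    (hρ : ρ ≠ 0) (b : V') {i : ℕ} (hi : i ≠ 0) {c : ℝ} (hc : c ≠ 0) {u : V' → ℝ}
    (hu : ContDiff ℝ i u) (hu₀ : ∀ y, u y ≠ 0) (x : V) (m : Fin i → V) :
    iteratedFDeriv ℝ i (fun y => Real.log (c * u (similarity R hρ b y))) x m =
      ρ ^ i * iteratedFDeriv ℝ i (fun y => Real.log (u y)) (similarity R hρ b x)
        (fun j => R (m j)) := by
  rw [iteratedFDeriv_log_const_mul hi hc fun y => hu₀ _]
  exact iteratedFDeriv_comp_smul_add (hu.log hu₀) le_rfl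
    R.toLinearIsometry.toContinuousLinearMap ρ b x m

section ChangeOfVariables

variable {V V' Y : Type*} [NormedAddCommGroup V] [InnerProductSpace ℝ V] [FiniteDimensional ℝ V]
  [MeasurableSpace V] [BorelSpace V] [NormedAddCommGroup V'] [InnerProductSpace ℝ V']
  [FiniteDimensional ℝ V'] [MeasurableSpace V'] [BorelSpace V'] [NormedAddCommGroup Y]
  (R : V ≃ₗᵢ[ℝ] V') {ρ : ℝ} (hρ : ρ ≠ 0) (b : V')

theorem map_similarity_volume :
    (volume : Measure V).map (similarity R hρ b) =
      ENNReal.ofReal |(ρ ^ Module.finrank ℝ V')⁻¹| • volume := by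
  rw [map_similarity, R.measurePreserving.map_eq, Measure.map_addHaar_smul volume hρ,
    Measure.map_smul, map_add_right_eq_self]

theorem integrable_comp_similarity {f : V' → Y} (hf : Integrable f) :
    Integrable fun x => f (similarity R hρ b x) := by
  refine (similarity R hρ b).measurableEmbedding.integrable_map_iff.1 ?_
  rw [map_similarity_volume]
  exact hf.smul_measure ENNReal.ofReal_ne_top

theorem integral_comp_similarity [NormedSpace ℝ Y] (f : V' → Y) :
    ∫ x, f (similarity R hρ b x) = |(ρ ^ Module.finrank ℝ V')⁻¹| • ∫ x, f x := by
  rw [← (similarity R hρ b).measurableEmbedding.integral_map, map_similarity_volume,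
    integral_smul_measure, ENNReal.toReal_ofReal (abs_nonneg _)]

end ChangeOfVariables

theorem div_sq_rpow_mul_abs_pow {ρ a : ℝ} (hρ : ρ ≠ 0) (ha : 0 ≤ a) (N n : ℕ) :
    (a / ρ ^ 2) ^ (((N : ℝ) - n) / 2) * |ρ| ^ N = a ^ (((N : ℝ) - n) / 2) * |ρ| ^ n := by
  have hρ' : 0 < |ρ| := abs_pos.2 hρ
  have hpow : (ρ ^ 2) ^ (((N : ℝ) - n) / 2) = |ρ| ^ N / |ρ| ^ n := by
    rw [← sq_abs, ← Real.rpow_natCast |ρ| 2, ← Real.rpow_mul hρ'.le, Nat.cast_ofNat,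
      mul_div_cancel₀ _ two_ne_zero, Real.rpow_sub hρ', Real.rpow_natCast, Real.rpow_natCast]
  rw [Real.div_rpow ha (sq_nonneg ρ), hpow]
  field_simp

section VirtualEntropy

variable {N : ℕ} (R : E N ≃ₗᵢ[ℝ] E N) {ρ : ℝ} (hρ : ρ ≠ 0) (b : E N)

theorem VT.comp_similarity {T : ℝ} {u : E N → ℝ} (hu : VT N T u) :
    VT N (T / ρ ^ 2) (fun x => |ρ| ^ N * u (similarity R hρ b x)) := by
  obtain ⟨hsmooth, hint, hpos, hmass, hhess⟩ := hu
  have hN : 0 < |ρ| ^ N := pow_pos (abs_pos.2 hρ) N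
  refine ⟨?_, (integrable_comp_similarity R hρ b hint).const_mul _,
    fun x => mul_pos hN (hpos _), ?_, fun x v => ?_⟩
  · exact contDiff_const.mul
      (hsmooth.comp ((R.contDiff.const_smul ρ).add contDiff_const))
  · rw [integral_const_mul, integral_comp_similarity, hmass, finrank_euclideanSpace_fin,
      abs_inv, abs_pow, smul_eq_mul, mul_one, mul_inv_cancel₀ hN.ne']
  · have hRv : (fun j => R (![v, v] j)) = ![R v, R v] := by
      ext j : 1
      fin_cases j <;> rfl
    have hbound := hhess (similarity R hρ b x) (R v)
    rw [R.norm_map] at hbound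
    rw [iteratedFDeriv_log_const_mul_comp_similarity R hρ b two_ne_zero hN.ne' hsmooth
      fun y => (hpos y).ne', hRv]
    convert hbound using 2
    field_simp

/-- The quantity `(4πT)^{(N-n)/2} ∫ u dμ`, whose supremum over `T > 0` and `u ∈ 𝒱𝒯₁⁺(T)` is the
virtual entropy `λ_V^n[μ]`. Negative values of `u` are truncated to `0`. -/
def scaledIntegral (n : ℕ) (T : ℝ) (u : E N → ℝ) (μ : Measure (E N)) : ℝ≥0∞ :=
  ENNReal.ofReal ((4 * Real.pi * T) ^ (((N : ℝ) - n) / 2)) * ∫⁻ x, ENNReal.ofReal (u x) ∂μ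

theorem scaledIntegral_nnnorm_pow_smul_map_similarity (n : ℕ) {T : ℝ} (hT : 0 ≤ T) (u : E N → ℝ)
    (μ : Measure (E N)) :
    scaledIntegral n T u (‖ρ‖₊ ^ n • μ.map (similarity R hρ b)) =
      scaledIntegral n (T / ρ ^ 2) (fun x => |ρ| ^ N * u (similarity R hρ b x)) μ := by
  have hnorm : ((‖ρ‖₊ ^ n : ℝ≥0) : ℝ≥0∞) = ENNReal.ofReal (|ρ| ^ n) := by
    rw [ENNReal.ofReal, Real.toNNReal_pow (abs_nonneg ρ), ← Real.norm_eq_abs, norm_toNNReal]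
  have hexp := div_sq_rpow_mul_abs_pow hρ (show 0 ≤ 4 * Real.pi * T by positivity) N n
  simp only [scaledIntegral, ENNReal.ofReal_mul (pow_nonneg (abs_nonneg ρ) N)]
  rw [lintegral_smul_measure, (similarity R hρ b).measurableEmbedding.lintegral_map,
    lintegral_const_mul' _ _ ENNReal.ofReal_ne_top, ENNReal.smul_def, hnorm, smul_eq_mul,
    ← mul_assoc, ← mul_assoc, ← ENNReal.ofReal_mul (by positivity),
    ← ENNReal.ofReal_mul (by positivity), ← mul_div_assoc, hexp]

theorem lamV_nnnorm_pow_smul_map_similarity_le (n : ℕ) (μ : Measure (E N)) :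
    lamV n (‖ρ‖₊ ^ n • μ.map (similarity R hρ b)) ≤ lamV n μ :=
  iSup₂_le fun T hT => iSup₂_le fun u hu =>
    (scaledIntegral_nnnorm_pow_smul_map_similarity R hρ b n hT.le u μ).trans_le <|
      le_iSup₂_of_le (T / ρ ^ 2) (by positivity) <|
        le_iSup₂_of_le _ (hu.comp_similarity R hρ b) le_rfl

theorem lamV_nnnorm_pow_smul_map_similarity (n : ℕ) (μ : Measure (E N)) :
    lamV n (‖ρ‖₊ ^ n • μ.map (similarity R hρ b)) = lamV n μ := by
  refine le_antisymm (lamV_nnnorm_pow_smul_map_similarity_le R hρ b n μ) ?_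
  have hinv : ‖ρ⁻¹‖₊ ^ n • (‖ρ‖₊ ^ n • μ.map (similarity R hρ b)).map
      (similarity R hρ b).symm = μ := by
    rw [Measure.map_smul, Measure.map_map (similarity R hρ b).symm.measurable
      (similarity R hρ b).measurable, (similarity R hρ b).symm_comp_self, Measure.map_id,
      smul_smul, ← mul_pow, ← nnnorm_mul, inv_mul_cancel₀ hρ, nnnorm_one, one_pow, one_smul]
  rw [similarity_symm] at hinv
  simpa only [hinv] using lamV_nnnorm_pow_smul_map_similarity_le R.symm (inv_ne_zero hρ)
    (-(ρ⁻¹ • R.symm b)) n (‖ρ‖₊ ^ n • μ.map (similarity R hρ b))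

end VirtualEntropy

theorem statement_11_general {N : ℕ} (n : ℕ) (S : Set (E N)) (R : E N ≃ₗᵢ[ℝ] E N) {ρ : ℝ}
    (hρ : ρ ≠ 0) (b : E N) :
    lamV n ((μH[(n : ℝ)]).restrict ((fun x => ρ • R x + b) '' S)) =
      lamV n ((μH[(n : ℝ)]).restrict S) := by
  rw [← coe_similarity R hρ b, hausdorffMeasure_restrict_image_similarity R hρ b n.cast_nonneg,
    NNReal.rpow_natCast, lamV_nnnorm_pow_smul_map_similarity]

/-- the virtual entropy of `ℋ^n⌞Σ` is invariant under compositions of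
rotations `R ∈ O(N)` (linear isometries), dilations `ρ > 0` and translations `b`. -/
theorem statement_11 (N n : ℕ) (hn : 1 ≤ n) (S : Set (E N)) (hS : MeasurableSet S)
    (R : E N ≃ₗᵢ[ℝ] E N) (ρ : ℝ) (hρ : 0 < ρ) (b : E N) :
    lamV n ((μH[(n : ℝ)]).restrict ((fun x => ρ • R x + b) '' S)) =
      lamV n ((μH[(n : ℝ)]).restrict S) :=
  statement_11_general n S R hρ.ne' b
end
end
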